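/- Let n and l be nonnegative integers, and for each fixed-point-free involution τ of {1,…,2n} let v_τ ∈ (ℂ^l)^{⊗2n} be the tensor v_τ = Σ_i e_{i(1)}⊗e_{i(2)}⊗⋯⊗e_{i(2n)}, the sum over all functions i : {1,…,2n} → {1,…,l} with i∘τ = i. Then the family { v_τ : τ a fixed-point-free involution of {1,…,2n} with L(τ) ≤ l } is a basis of the subspace F_{2n}(O(l)) = { v ∈ (ℂ^l)^{⊗2n} : U^{⊗2n} v = v for every l×l real orthogonal matrix U (regarded as a complex matrix) }. -/

import Mathlib

open scoped TensorProduct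

noncomputable section

/-- `lisLE π l` means the longest increasing subsequence of the permutation `π`
has length at most `l`. -/
def lisLE {N : ℕ} (π : Equiv.Perm (Fin N)) (l : ℕ) : Prop :=
  ∀ (k : ℕ) (f : Fin k → Fin N), StrictMono f → StrictMono (fun i => π (f i)) → k ≤ l

/-- The endomorphism `M^{⊗n}` of `(ℂ^l)^{⊗n}` induced by a matrix `M`, acting as `M`
on each tensor factor. -/
def tpow (n l : ℕ) (M : Matrix (Fin l) (Fin l) ℂ) :
    Module.End ℂ (⨂[ℂ] _ : Fin n, (Fin l → ℂ)) :=
  PiTensorProduct.map (fun _ : Fin n => Matrix.toLin' M)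

/-- The basic orthogonal invariant `v_τ = Σ_i e_{i(1)}⊗⋯⊗e_{i(2n)}`, summed over all
functions `i : {1,…,2n} → {1,…,l}` with `i∘τ = i`. -/
def vTau (n l : ℕ) (τ : Equiv.Perm (Fin (2 * n))) :
    ⨂[ℂ] _ : Fin (2 * n), (Fin l → ℂ) :=
  ∑ i ∈ Finset.univ.filter (fun i : Fin (2 * n) → Fin l => i ∘ τ = i),
    PiTensorProduct.tprod ℂ (fun j => Pi.single (i j) (1 : ℂ))

/-!
The vectors `v_τ` of the short matchings `τ` are independent by triangularity. Colour `x` by the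
length of the longest increasing subsequence of `τ` that ends at `x`; this coloring `i` satisfies
`i ∘ τ = i`, uses at most `l` colours, and `τ` is decreasing on each colour class. A greedy
comparison from the left then shows that `τ` is the lexicographically largest involution with
`i ∘ τ = i`, so the `i`-coordinate of `v_σ` vanishes for `σ > τ`.

They span the same space as all the `v_τ`: if `τ` is increasing on more than `l` points, then
antisymmetrizing `v_τ` over these points gives `0`, because two of them always share a colour, and
every nontrivial permutation of the points yields a lexicographically larger matching.

That all the `v_τ` span the invariants is proved by showing that an invariant tensor `v` of
degree `N` orthogonal to every `v_τ` vanishes. By induction on `N` every contraction of `v` is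
zero. Let `E_ab` act as the derivation of the tensor algebra given by the matrix unit.
Differentiating rotations gives `E_ab v = E_ba v`, and since `v` is traceless this implies
`∑ ‖E_ab v‖² = N ‖v‖²`. On the other hand, reflections show that every colour occurs an even
number of times in each multi-index of the support of `v`, so a colour that occurs has
multiplicity at least `2`, whence already `∑ ‖E_aa v‖² ≥ 2 N ‖v‖²`. Thus `v = 0` if `N > 0`.
-/

open Equiv Matrix

/-- Perfect matchings of `ι`, encoded as the fixed-point-free involutions that swap the two
points of each pair. -/
structure IsMatching {ι : Type*} (τ : Perm ι) : Prop where
  involutive : Function.Involutive τ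
  apply_ne : ∀ x, τ x ≠ x

/-- The coordinates, in the standard basis of the tensor power, of the tensor attached to the
matching `τ`. -/
def matchingVec {ι : Type*} [Fintype ι] (R κ : Type*) [Zero R] [One R] [DecidableEq κ]
    (τ : Perm ι) : (ι → κ) → R :=
  fun i => if i ∘ τ = i then 1 else 0

theorem IsMatching.conj {ι : Type*} {τ : Perm ι} (hτ : IsMatching τ) (g : Perm ι) :
    IsMatching (g * τ * g⁻¹) where
  involutive x := by simp [hτ.involutive _]
  apply_ne x hx := hτ.apply_ne (g⁻¹ x) (Perm.eq_inv_iff_eq.2 hx)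

theorem matchingVec_conj_apply {ι R κ : Type*} [Fintype ι] [Zero R] [One R] [DecidableEq κ]
    (τ g : Perm ι) (i : ι → κ) :
    matchingVec R κ (g * τ * g⁻¹) i = matchingVec R κ τ (i ∘ g) :=
  if_congr (g.comp_symm_eq i ((i ∘ g) ∘ τ)) rfl rfl

/-! ### Linear independence -/

section Independence

variable {ι : Type*} [LinearOrder ι] {τ σ : Perm ι}

/-- The length of the longest increasing subsequence of `τ` is at most `l`; a subsequence is
recorded by its set of positions. -/
def IncreasingLengthLE (τ : Perm ι) (l : ℕ) : Prop :=
  ∀ s : Finset ι, StrictMonoOn τ s → s.card ≤ l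

theorem IncreasingLengthLE.le_of_strictMono {l k : ℕ} (hτ : IncreasingLengthLE τ l)
    {f : Fin k → ι} (hf : StrictMono f) (hτf : StrictMono (τ ∘ f)) : k ≤ l := by
  have hmono : StrictMonoOn τ (Finset.univ.map ⟨f, hf.injective⟩ : Finset ι) := by
    rw [Finset.coe_map, Finset.coe_univ, Set.image_univ]
    rintro _ ⟨a, rfl⟩ _ ⟨b, rfl⟩ hab
    exact hτf (hf.lt_iff_lt.1 hab)
  simpa using hτ _ hmono

theorem lisLE_iff_increasingLengthLE {N l : ℕ} {τ : Perm (Fin N)} :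
    lisLE τ l ↔ IncreasingLengthLE τ l :=
  ⟨fun h s hs => h s.card (s.orderEmbOfFin rfl) (s.orderEmbOfFin rfl).strictMono fun _ _ hij =>
      hs (s.orderEmbOfFin_mem rfl _) (s.orderEmbOfFin_mem rfl _)
        ((s.orderEmbOfFin rfl).strictMono hij),
    fun h _ _ hf hτf => h.le_of_strictMono hf hτf⟩

/-- The matchings without increasing subsequences of length greater than `l`. -/
def shortMatchings (ι : Type*) [LinearOrder ι] (l : ℕ) : Set (Perm ι) :=
  {τ | IsMatching τ ∧ IncreasingLengthLE τ l}

/-- The graph of `τ` in the product order, whose chains are the increasing subsequences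
of `τ`. -/
abbrev PermGraph (τ : Perm ι) : Type _ := {p : ι × ι // p.2 = τ p.1}

theorem PermGraph.lt_iff {p q : PermGraph τ} :
    p < q ↔ p.1.1 < q.1.1 ∧ τ p.1.1 < τ q.1.1 := by
  rw [← Subtype.coe_lt_coe, Prod.lt_iff, p.2, q.2]
  refine ⟨?_, fun h => Or.inl ⟨h.1, h.2.le⟩⟩
  rintro (⟨hlt, hle⟩ | ⟨hle, hlt⟩)
  · exact ⟨hlt, hle.lt_of_ne (τ.injective.ne hlt.ne)⟩
  · exact ⟨hle.lt_of_ne (ne_of_apply_ne τ hlt.ne), hlt⟩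

theorem IncreasingLengthLE.height_lt {l : ℕ} (hτ : IncreasingLengthLE τ l) (p : PermGraph τ) :
    Order.height p < l := by
  by_contra! hl
  obtain ⟨c, -, rfl⟩ := Order.exists_series_of_le_height p hl
  have hc {m n} (hmn : m < n) := PermGraph.lt_iff.1 (c.strictMono hmn)
  exact (hτ.le_of_strictMono (f := fun m => (c m).1.1) (fun _ _ h => (hc h).1)
    fun _ _ h => (hc h).2).not_gt c.length.lt_succ_self

/-- The reflection of the graph of a matching in the diagonal. -/
def IsMatching.graphSwap (hτ : IsMatching τ) : PermGraph τ ≃o PermGraph τ where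
  toEquiv := (Equiv.prodComm ι ι).subtypeEquiv fun p => by
    rw [Equiv.prodComm_apply, Prod.fst_swap, Prod.snd_swap, ← hτ.involutive.eq_iff, eq_comm]
  map_rel_iff' := Prod.swap_le_swap

theorem IsMatching.exists_antitone_coloring {κ : Type*} [Fintype κ] (hτ : IsMatching τ)
    (hl : IncreasingLengthLE τ (Fintype.card κ)) :
    ∃ i : ι → κ, i ∘ τ = i ∧ ∀ x y, x < y → i x = i y → τ y < τ x := by
  let point (x : ι) : PermGraph τ := ⟨(x, τ x), rfl⟩
  have hcoe (x : ι) : ((Order.height (point x)).toNat : ℕ∞) = Order.height (point x) :=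
    ENat.natCast_toNat (hl.height_lt _).ne_top
  have hlt (x : ι) : (Order.height (point x)).toNat < Fintype.card κ := by
    exact_mod_cast (hcoe x).trans_lt (hl.height_lt _)
  have hswap (x : ι) : Order.height (point (τ x)) = Order.height (point x) := by
    rw [← Order.height_orderIso hτ.graphSwap (point x)]
    exact congrArg _ (Subtype.ext (Prod.ext rfl (hτ.involutive x)))
  refine ⟨fun x => (Fintype.equivFin κ).symm ⟨_, hlt x⟩, funext fun x => ?_, fun x y hxy hi => ?_⟩
  · simp [hswap]
  · have hheight : Order.height (point x) = Order.height (point y) := by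
      rw [← hcoe x, ← hcoe y]
      exact congrArg _ (Fin.ext_iff.1 ((Fintype.equivFin κ).symm.injective hi))
    by_contra! hle
    have hpoint : point x < point y :=
      PermGraph.lt_iff.2 ⟨hxy, hle.lt_of_ne (τ.injective.ne hxy.ne)⟩
    exact (Order.height_strictMono hpoint ((hl.height_lt _).trans_le le_top)).ne hheight

theorem IsMatching.toLex_le_of_antitone_coloring {κ : Type*} [WellFoundedLT ι]
    (hτ : IsMatching τ) {i : ι → κ} (hi : i ∘ τ = i)
    (hanti : ∀ x y, x < y → i x = i y → τ y < τ x) (hσ : i ∘ σ = i) : toLex ⇑σ ≤ toLex ⇑τ := by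
  by_contra! hlt
  obtain ⟨x, heq, hx : τ x < σ x⟩ := hlt
  have hcolor : i x = i (τ (σ x)) := (congrFun hσ x).symm.trans (congrFun hi (σ x)).symm
  rcases lt_trichotomy x (τ (σ x)) with h | h | h
  · have := hanti _ _ h hcolor
    rw [hτ.involutive] at this
    exact this.asymm hx
  · exact hx.ne (hτ.involutive.eq_iff.2 h)
  · have : τ (τ (σ x)) = σ (τ (σ x)) := heq _ h
    rw [hτ.involutive] at this
    exact h.ne (σ.injective this).symm

theorem linearIndepOn_matchingVec (R : Type*) {κ : Type*} [Ring R] [Fintype ι] [Fintype κ]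
    [DecidableEq κ] :
    LinearIndepOn R (matchingVec R κ) (shortMatchings ι (Fintype.card κ)) := by
  rw [LinearIndepOn, linearIndependent_iff]
  intro g hg
  by_contra hne
  obtain ⟨τ, hτg, hmin⟩ := g.support.exists_min_image (fun τ => toLex ⇑τ.1)
    (Finsupp.support_nonempty_iff.2 hne)
  obtain ⟨i, hi, hanti⟩ := τ.2.1.exists_antitone_coloring τ.2.2
  have hterm : ∀ σ ∈ g.support, σ ≠ τ → g σ * matchingVec R κ σ.1 i = 0 := by
    intro σ hσg hστ
    refine mul_eq_zero_of_right _ (if_neg fun hσ => hστ ?_)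
    have hle := τ.2.1.toLex_le_of_antitone_coloring hi hanti hσ
    exact Subtype.ext (DFunLike.coe_injective (toLex.injective (hle.antisymm (hmin σ hσg))))
  have hzero : ∑ σ ∈ g.support, g σ * matchingVec R κ σ.1 i = 0 := by
    simpa [Finsupp.linearCombination_apply, Finsupp.sum] using congrFun hg i
  rw [Finset.sum_eq_single_of_mem τ hτg hterm, matchingVec, if_pos hi, mul_one] at hzero
  exact Finsupp.mem_support_iff.1 hτg hzero

end Independence

/-! ### Straightening -/

theorem sum_sign_smul_comp_ofSubtype {ι κ R : Type*} [DecidableEq ι] [Fintype κ] [Ring R]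
    (F : (ι → κ) → R) {s : Finset ι} (hs : Fintype.card κ < s.card) (i : ι → κ) :
    ∑ g : Perm s, Perm.sign g • F (i ∘ Perm.ofSubtype g) = 0 := by
  obtain ⟨a, b, hab, hi⟩ := Fintype.exists_ne_map_eq_of_card_lt (fun x : s => i x) (by simpa)
  have hswap (g : Perm s) : i ∘ ⇑(Perm.ofSubtype (swap a b * g)) = i ∘ ⇑(Perm.ofSubtype g) := by
    have hi_swap : i ∘ swap (a : ι) b = i := by
      rw [comp_swap_eq_update, hi, Function.update_eq_self, ← hi, Function.update_eq_self]
    rw [map_mul, Perm.ofSubtype_swap_eq, Perm.coe_mul, ← Function.comp_assoc, hi_swap]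
  refine Finset.sum_involution (fun g _ => swap a b * g) (fun g _ => ?_) (fun g _ _ => ?_)
    (fun g _ => Finset.mem_univ _) fun g _ => swap_mul_self_mul a b g
  · rw [hswap, Perm.sign_mul, Perm.sign_swap hab, neg_one_mul,
      Units.neg_smul, add_neg_cancel]
  · simpa using hab

section Straightening

variable {ι : Type*} [LinearOrder ι] {τ g : Perm ι} {s : Set ι}

theorem IsMatching.apply_notMem_of_strictMonoOn (hτ : IsMatching τ) (hs : StrictMonoOn τ s)
    {x : ι} (hx : x ∈ s) : τ x ∉ s := by
  intro hτx
  rcases (hτ.apply_ne x).lt_or_gt with h | h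
  · have := hs hτx hx h
    rw [hτ.involutive] at this
    exact this.asymm h
  · have := hs hx hτx h
    rw [hτ.involutive] at this
    exact this.asymm h

theorem IsMatching.toLex_lt_conj [WellFoundedLT ι] (hτ : IsMatching τ) (hs : StrictMonoOn τ s)
    (hg : ∀ x ∉ s, g x = x) (hne : g ≠ 1) : toLex ⇑τ < toLex ⇑(g * τ * g⁻¹) := by
  have hmem {x : ι} (hx : x ∈ s) : g⁻¹ x ∈ s := by
    by_contra h
    rw [← hg _ h] at h
    exact h (by simpa)
  have hconj_mem {x : ι} (hx : x ∈ s) : (g * τ * g⁻¹) x = τ (g⁻¹ x) :=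
    hg _ (hτ.apply_notMem_of_strictMonoOn hs (hmem hx))
  have hconj_notMem {x : ι} (hx : x ∉ s) : (g * τ * g⁻¹) x = g (τ x) := by
    rw [Perm.mul_apply, Perm.mul_apply, Perm.inv_eq_iff_eq.2 (hg x hx).symm]
  refine lt_of_le_of_ne (not_lt.1 ?_) fun heq => hne ?_
  · rintro ⟨x, heq, hx : (g * τ * g⁻¹) x < τ x⟩
    by_cases hxs : x ∈ s
    · rw [hconj_mem hxs] at hx
      have hlt : g⁻¹ x < x := (hs.lt_iff_lt (hmem hxs) hxs).1 hx
      have hy := τ.injective ((hconj_mem (hmem hxs)).symm.trans (heq _ hlt))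
      exact hlt.ne (g⁻¹.injective hy)
    · rw [hconj_notMem hxs] at hx
      have hz : τ x ∈ s := by_contra fun hz => hx.ne (hg _ hz)
      have hgz : g (τ x) ∈ s := by_contra fun h => h (by rwa [g.injective (hg _ h)])
      have hlt : τ (g (τ x)) < x := by
        simpa only [hτ.involutive x] using hs hgz hz hx
      have hfix_gz : (g * τ * g⁻¹) (τ (g (τ x))) = τ (τ (g (τ x))) := heq _ hlt
      rw [hconj_notMem (hτ.apply_notMem_of_strictMonoOn hs hgz), hτ.involutive] at hfix_gz
      exact hx.ne (g.injective hfix_gz)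
  · have heq' (x : ι) : τ x = (g * τ * g⁻¹) x := congrFun heq x
    ext x
    by_cases hxs : x ∈ s
    · exact Perm.inv_eq_iff_eq.1 (τ.injective ((hconj_mem hxs).symm.trans (heq' x).symm)) |>.symm
    · exact hg x hxs

end Straightening

theorem matchingVec_mem_span_shortMatchings {ι : Type*} [LinearOrder ι] [Fintype ι] (R κ : Type*)
    [Ring R] [Fintype κ] [DecidableEq κ] {τ : Perm ι} (hτ : IsMatching τ) :
    matchingVec R κ τ ∈
      Submodule.span R (matchingVec R κ '' shortMatchings ι (Fintype.card κ)) := by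
  have hwf : WellFounded fun σ τ : Perm ι => toLex ⇑τ < toLex ⇑σ :=
    InvImage.wf (fun τ : Perm ι => toLex ⇑τ) wellFounded_gt
  induction τ using hwf.induction with
  | _ τ ih =>
  by_cases hl : IncreasingLengthLE τ (Fintype.card κ)
  · exact Submodule.subset_span ⟨τ, ⟨hτ, hl⟩, rfl⟩
  rw [IncreasingLengthLE] at hl
  push Not at hl
  obtain ⟨s, hs, hcard⟩ := hl
  have hrel : ∑ g : Perm s, Perm.sign g •
      matchingVec R κ (Perm.ofSubtype g * τ * (Perm.ofSubtype g)⁻¹) = 0 := by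
    ext i
    simpa [matchingVec_conj_apply] using sum_sign_smul_comp_ofSubtype (matchingVec R κ τ) hcard i
  rw [← Finset.add_sum_erase _ _ (Finset.mem_univ 1), map_one, map_one, one_smul, one_mul,
    inv_one, mul_one] at hrel
  rw [eq_neg_of_add_eq_zero_left hrel]
  refine neg_mem (sum_mem fun g hg => ?_)
  rw [Units.smul_def]
  refine zsmul_mem (ih _ ?_ (hτ.conj _)) _
  refine hτ.toLex_lt_conj hs (fun x hx => Perm.ofSubtype_apply_of_not_mem g hx) ?_
  rw [← map_one (Perm.ofSubtype (p := (· ∈ s))), Perm.ofSubtype_injective.ne_iff]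
  exact Finset.ne_of_mem_erase hg

/-! ### Contractions and invariance of matchings -/

/-- The matrix of `M^{⊗ι}` in the standard basis of the tensor power. -/
def tensorPow (ι : Type*) {κ R : Type*} [Fintype ι] [CommSemiring R] (M : Matrix κ κ R) :
    Matrix (ι → κ) (ι → κ) R :=
  of fun i j => ∏ x, M (i x) (j x)

theorem tensorPow_diagonal {ι κ R : Type*} [Fintype ι] [DecidableEq κ] [CommSemiring R]
    (d : κ → R) : tensorPow ι (diagonal d) = diagonal fun i => ∏ x, d (i x) := by
  ext i j
  simp only [tensorPow, of_apply, diagonal_apply, Fintype.prod_ite_zero, funext_iff]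

/-- The positions that remain when the positions `p` and `q` are contracted. -/
abbrev PairCompl {ι : Type*} (p q : ι) : Type _ := {x : ι // x ≠ p ∧ x ≠ q}

section Contraction

variable {ι κ R : Type*} [DecidableEq ι] {p q : ι}

/-- The multi-index with colour `c` at `p` and `q` and colours `i` elsewhere. -/
def pairFill (c : κ) (i : PairCompl p q → κ) : ι → κ :=
  fun x => if hx : x ≠ p ∧ x ≠ q then i ⟨x, hx⟩ else c

@[simp] theorem pairFill_left (c : κ) (i : PairCompl p q → κ) : pairFill c i p = c :=
  dif_neg fun h => h.1 rfl

@[simp] theorem pairFill_right (c : κ) (i : PairCompl p q → κ) : pairFill c i q = c :=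
  dif_neg fun h => h.2 rfl

@[simp] theorem pairFill_coe (c : κ) (i : PairCompl p q → κ) (x : PairCompl p q) :
    pairFill c i x = i x :=
  dif_pos x.2

theorem pairFill_eq {c : κ} {j : ι → κ} (hp : j p = c) (hq : j q = c) :
    pairFill c (fun x : PairCompl p q => j x) = j := by
  ext x
  rw [pairFill]
  split_ifs with hx
  · rfl
  · obtain rfl | rfl : x = p ∨ x = q := by tauto
    exacts [hp.symm, hq.symm]

theorem exists_pairFill_eq_iff {i : PairCompl p q → κ} {j : ι → κ} :
    (∃ c, pairFill c i = j) ↔ j p = j q ∧ j ∘ (↑) = i := by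
  constructor
  · rintro ⟨c, rfl⟩
    exact ⟨by simp, funext fun x => by simp⟩
  · rintro ⟨hpq, rfl⟩
    exact ⟨j p, pairFill_eq rfl hpq.symm⟩

theorem update_left_eq_pairFill (hpq : p ≠ q) (i : ι → κ) :
    Function.update i p (i q) = pairFill (i q) fun x : PairCompl p q => i x :=
  (pairFill_eq (Function.update_self p (i q) i) (Function.update_of_ne hpq.symm (i q) i)).symm.trans
    (congrArg _ (funext fun x => Function.update_of_ne x.2.1 (i q) i))

theorem update_right_eq_pairFill (hpq : p ≠ q) (i : ι → κ) :
    Function.update i q (i p) = pairFill (i p) fun x : PairCompl p q => i x :=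
  (pairFill_eq (Function.update_of_ne hpq (i p) i) (Function.update_self q (i p) i)).symm.trans
    (congrArg _ (funext fun x => Function.update_of_ne x.2.2 (i p) i))

variable [Fintype ι]

theorem prod_eq_mul_mul_prod_pairCompl [CommMonoid R] (hpq : p ≠ q) (f : ι → R) :
    ∏ x, f x = f p * (f q * ∏ x : PairCompl p q, f x) := by
  rw [← Finset.mul_prod_erase _ f (Finset.mem_univ p),
    ← Finset.mul_prod_erase _ f (Finset.mem_erase.2 ⟨hpq.symm, Finset.mem_univ q⟩)]
  congr 2
  exact Finset.prod_subtype _ (by simp [and_comm]) f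

variable [CommSemiring R] [Fintype κ] [DecidableEq κ]

/-- The contraction of the tensor factors at `p` and `q`. -/
def contraction (R κ : Type*) [CommSemiring R] [DecidableEq κ] (p q : ι) :
    Matrix (PairCompl p q → κ) (ι → κ) R :=
  of fun i j => if j p = j q ∧ j ∘ (↑) = i then 1 else 0

theorem contraction_mulVec_apply (v : (ι → κ) → R) (i : PairCompl p q → κ) :
    (contraction R κ p q *ᵥ v) i = ∑ c, v (pairFill c i) := by
  symm
  refine Fintype.sum_of_injective (fun c => pairFill c i) (fun c d h => ?_) _ _
    (fun j hj => ?_) fun c => ?_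
  · simpa using congrFun h p
  · exact mul_eq_zero_of_left (if_neg (mt exists_pairFill_eq_iff.2 hj)) _
  · exact ((congrArg (· * _) (if_pos (exists_pairFill_eq_iff.1 ⟨c, rfl⟩))).trans (one_mul _)).symm

theorem vecMul_contraction_apply (w : (PairCompl p q → κ) → R) (j : ι → κ) :
    (w ᵥ* contraction R κ p q) j = if j p = j q then w (j ∘ (↑)) else 0 := by
  simp [vecMul, dotProduct, contraction, ite_and]

theorem contraction_mul_tensorPow (hpq : p ≠ q) {M : Matrix κ κ R} (hM : Mᵀ * M = 1) :
    contraction R κ p q * tensorPow ι M = tensorPow (PairCompl p q) M * contraction R κ p q := by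
  ext i k
  have horth : ∑ c, M c (k p) * M c (k q) = if k p = k q then 1 else 0 := by
    rw [← one_apply, ← hM]
    rfl
  calc (contraction R κ p q *ᵥ fun j => tensorPow ι M j k) i
      = ∑ c, M c (k p) * M c (k q) * ∏ x : PairCompl p q, M (i x) (k x) := by
        simp [contraction_mulVec_apply, tensorPow, prod_eq_mul_mul_prod_pairCompl hpq, mul_assoc]
    _ = if k p = k q then ∏ x : PairCompl p q, M (i x) (k x) else 0 := by
        rw [← Finset.sum_mul, horth, ite_mul, one_mul, zero_mul]
    _ = ((tensorPow (PairCompl p q) M) i ᵥ* contraction R κ p q) k := by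
        rw [vecMul_contraction_apply]
        rfl

theorem matchingVec_vecMul_contraction {τ : Perm ι} {τ' : Perm (PairCompl p q)} (hp : τ p = q)
    (hq : τ q = p) (hτ : ∀ x : PairCompl p q, (τ' x : ι) = τ x) :
    matchingVec R κ τ' ᵥ* contraction R κ p q = matchingVec R κ τ := by
  ext j
  rw [vecMul_contraction_apply, matchingVec, matchingVec, ← ite_and]
  refine if_congr ⟨fun ⟨hpq, hj⟩ => funext fun x => ?_, fun hj => ⟨?_, funext fun x => ?_⟩⟩ rfl rfl
  · by_cases hx : x ≠ p ∧ x ≠ q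
    · simpa [hτ] using congrFun hj ⟨x, hx⟩
    · obtain rfl | rfl : x = p ∨ x = q := by tauto
      · rw [Function.comp_apply, hp, hpq]
      · rw [Function.comp_apply, hq, hpq]
  · simpa [hp] using (congrFun hj p).symm
  · simpa [hτ] using congrFun hj x

end Contraction

section Pairs

variable {ι : Type*} {τ : Perm ι} {p q : ι}

/-- The matching `τ` without the pair of `p`. -/
def IsMatching.removePair (hτ : IsMatching τ) (p : ι) : Perm (PairCompl p (τ p)) :=
  τ.subtypePerm fun x => by
    rw [τ.injective.ne_iff, Ne, hτ.involutive.eq_iff, and_comm]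

theorem IsMatching.isMatching_removePair (hτ : IsMatching τ) (p : ι) :
    IsMatching (hτ.removePair p) where
  involutive x := Subtype.ext (hτ.involutive x)
  apply_ne x hx := hτ.apply_ne x (congrArg Subtype.val hx)

/-- The permutation `τ` together with the additional pair `{p, q}`. -/
def addPair [DecidableEq ι] (τ : Perm (PairCompl p q)) : Perm ι :=
  swap p q * Perm.ofSubtype τ

variable [DecidableEq ι] (σ : Perm (PairCompl p q))

theorem addPair_left : addPair σ p = q := by
  simp [addPair, Perm.ofSubtype_apply_of_not_mem]

theorem addPair_right : addPair σ q = p := by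
  simp [addPair, Perm.ofSubtype_apply_of_not_mem]

theorem addPair_coe (x : PairCompl p q) : addPair σ x = σ x := by
  simp [addPair, swap_apply_of_ne_of_ne (σ x).2.1 (σ x).2.2]

theorem IsMatching.addPair {σ : Perm (PairCompl p q)} (hσ : IsMatching σ) (hpq : p ≠ q) :
    IsMatching (addPair σ) := by
  have hx (x : ι) : x = p ∨ x = q ∨ ∃ y : PairCompl p q, (y : ι) = x := by
    simp only [Subtype.exists, exists_prop, exists_eq_right]
    tauto
  constructor <;> intro x <;> obtain rfl | rfl | ⟨y, rfl⟩ := hx x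
  · rw [addPair_left, addPair_right]
  · rw [addPair_right, addPair_left]
  · rw [addPair_coe, addPair_coe, hσ.involutive]
  · rw [addPair_left]
    exact hpq.symm
  · rwa [addPair_right]
  · rw [addPair_coe, Ne, Subtype.coe_inj]
    exact hσ.apply_ne y

end Pairs

theorem IsMatching.tensorPow_mulVec_matchingVec {ι κ R : Type*} [Fintype ι] [DecidableEq ι]
    [Fintype κ] [DecidableEq κ] [CommSemiring R] {τ : Perm ι} (hτ : IsMatching τ)
    {M : Matrix κ κ R} (hM : M * Mᵀ = 1) :
    tensorPow ι M *ᵥ matchingVec R κ τ = matchingVec R κ τ := by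
  induction hn : Fintype.card ι using Nat.strong_induction_on generalizing ι with
  | _ n ih =>
  subst hn
  rcases isEmpty_or_nonempty ι with _ | ⟨⟨p⟩⟩
  · ext i
    simp [mulVec, dotProduct, tensorPow, matchingVec, eq_iff_true_of_subsingleton]
  have hcard : Fintype.card (PairCompl p (τ p)) < Fintype.card ι :=
    Fintype.card_subtype_lt (x := p) fun h => h.1 rfl
  have hfixed := ih _ hcard (hτ.isMatching_removePair p) rfl
  rw [← matchingVec_vecMul_contraction (τ' := hτ.removePair p) rfl (hτ.involutive p) fun _ => rfl]
  set w := matchingVec R κ (hτ.removePair p)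
  let K := contraction R κ p (τ p)
  calc tensorPow ι M *ᵥ (w ᵥ* K)
      = w ᵥ* (K * tensorPow ι Mᵀ) := by
        rw [← vecMul_vecMul, ← vecMul_transpose]; rfl
    _ = w ᵥ* (tensorPow (PairCompl p (τ p)) Mᵀ * K) := by
        rw [contraction_mul_tensorPow (hτ.apply_ne p).symm (by rwa [transpose_transpose])]
    _ = (tensorPow (PairCompl p (τ p)) M *ᵥ w) ᵥ* K := by
        rw [← vecMul_vecMul, ← vecMul_transpose]; rfl
    _ = w ᵥ* K := by rw [hfixed]

/-! ### Derivations -/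

section Derivation

variable {ι κ R : Type*} [Fintype ι] [DecidableEq ι] [Fintype κ]

/-- The action of `X` on the tensor power as a derivation, that is, the sum over all positions of
`X` acting on that tensor factor. -/
def derivationAction [CommSemiring R] (X : Matrix κ κ R) (v : (ι → κ) → R) : (ι → κ) → R :=
  fun i => ∑ p, ∑ c, X (i p) c * v (Function.update i p c)

theorem derivationAction_sub [CommRing R] (X Y : Matrix κ κ R) (v : (ι → κ) → R) :
    derivationAction (X - Y) v = derivationAction X v - derivationAction Y v := by
  ext i
  simp [derivationAction, sub_mul, Finset.sum_sub_distrib]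

theorem sum_prod_erase_one_mul [CommSemiring R] [DecidableEq κ] (i : ι → κ) (p : ι)
    (F : (ι → κ) → R) :
    ∑ j, (∏ q ∈ Finset.univ.erase p, (1 : Matrix κ κ R) (i q) (j q)) * F j =
      ∑ c, F (Function.update i p c) := by
  symm
  refine Fintype.sum_of_injective (fun c => Function.update i p c)
    (Function.update_injective i p) _ _ (fun j hj => ?_) fun c => ?_
  · obtain ⟨q, hq, hne⟩ : ∃ q, q ≠ p ∧ i q ≠ j q := by
      by_contra! hall
      exact hj ⟨j p, Function.update_eq_iff.2 ⟨rfl, hall⟩⟩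
    have hmem : q ∈ Finset.univ.erase p := Finset.mem_erase.2 ⟨hq, Finset.mem_univ q⟩
    have hentry : (1 : Matrix κ κ R) (i q) (j q) = 0 := one_apply_ne hne
    exact mul_eq_zero_of_left (Finset.prod_eq_zero hmem hentry) _
  · rw [Finset.prod_eq_one fun q hq => ?_, one_mul]
    rw [Function.update_of_ne (Finset.ne_of_mem_erase hq), one_apply_eq]

theorem hasDerivAt_tensorPow_mulVec {𝕜 A : Type*} [NontriviallyNormedField 𝕜] [NormedCommRing A]
    [NormedAlgebra 𝕜 A] [DecidableEq κ] {M : 𝕜 → Matrix κ κ A} {X : Matrix κ κ A} {t : 𝕜}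
    (hM : ∀ x y, HasDerivAt (fun s => M s x y) (X x y) t) (ht : M t = 1) (v : (ι → κ) → A)
    (i : ι → κ) :
    HasDerivAt (fun s => (tensorPow ι (M s) *ᵥ v) i) (derivationAction X v i) t := by
  have hder := HasDerivAt.fun_sum (u := Finset.univ) fun (j : ι → κ) _ =>
    (HasDerivAt.fun_finsetProd (u := Finset.univ) fun p _ => hM (i p) (j p)).mul_const (v j)
  have hvalue : derivationAction X v i = ∑ j : ι → κ,
      (∑ p, (∏ q ∈ Finset.univ.erase p, M t (i q) (j q)) • X (i p) (j p)) * v j := by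
    simp only [ht, smul_eq_mul, Finset.sum_mul, mul_assoc]
    rw [Finset.sum_comm]
    simp only [sum_prod_erase_one_mul i _ fun j => X (i _) (j _) * v j, Function.update_self,
      derivationAction]
  rw [hvalue]
  exact hder

section MatrixUnits

variable [DecidableEq κ] [CommSemiring R]

theorem derivationAction_single_apply (a b : κ) (v : (ι → κ) → R) (i : ι → κ) :
    derivationAction (single a b 1) v i =
      ∑ p, if i p = a then v (Function.update i p b) else 0 := by
  simp [derivationAction, single_apply, ite_and, eq_comm]

theorem derivationAction_single_self (a : κ) (v : (ι → κ) → R) (i : ι → κ) :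
    derivationAction (single a a 1) v i = (Finset.univ.filter fun p => i p = a).card * v i := by
  rw [derivationAction_single_apply, ← Finset.sum_filter, ← nsmul_eq_mul]
  refine Finset.sum_eq_card_nsmul fun p hp => ?_
  rw [← (Finset.mem_filter.1 hp).2, Function.update_eq_self]

theorem sum_derivationAction_mul (v w : (ι → κ) → R) (i : ι → κ) :
    ∑ a, ∑ b, derivationAction (single a b 1) v i * derivationAction (single b a 1) w i =
      ∑ p, ∑ q, v (Function.update i p (i q)) * w (Function.update i q (i p)) := by
  calc _ = ∑ x : κ × κ, ∑ y : ι × ι, (if i y.1 = x.1 then v (Function.update i y.1 x.2) else 0) *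
        (if i y.2 = x.2 then w (Function.update i y.2 x.1) else 0) := by
        simp only [derivationAction_single_apply, Finset.sum_mul_sum, Fintype.sum_prod_type]
    _ = ∑ y : ι × ι, v (Function.update i y.1 (i y.2)) * w (Function.update i y.2 (i y.1)) := by
        rw [Finset.sum_comm]
        simp [Fintype.sum_prod_type]
    _ = _ := Fintype.sum_prod_type _

theorem sum_update_mul_update {p q : ι} (hpq : p ≠ q) (v w : (ι → κ) → R) :
    ∑ i : ι → κ, v (Function.update i p (i q)) * w (Function.update i q (i p)) =
      (contraction R κ p q *ᵥ v) ⬝ᵥ (contraction R κ p q *ᵥ w) := by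
  let e : (ι → κ) ≃ (PairCompl p q → κ) × κ × κ :=
    { toFun := fun i => (fun x => i x, i q, i p)
      invFun := fun x => Function.update (pairFill x.2.1 x.1) p x.2.2
      left_inv := fun i => by
        simp only [← update_left_eq_pairFill hpq, Function.update_idem, Function.update_eq_self]
      right_inv := fun x => by
        refine Prod.ext (funext fun y => ?_) (Prod.ext ?_ ?_)
        · simp [Function.update_of_ne y.2.1]
        · simp [Function.update_of_ne hpq.symm]
        · simp }
  calc _ = ∑ x : (PairCompl p q → κ) × κ × κ, v (pairFill x.2.1 x.1) * w (pairFill x.2.2 x.1) :=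
        Fintype.sum_equiv e _ _ fun i => by
          rw [update_left_eq_pairFill hpq, update_right_eq_pairFill hpq]
          rfl
    _ = _ := by simp [Fintype.sum_prod_type, dotProduct, contraction_mulVec_apply,
        Finset.sum_mul_sum]

theorem sum_sum_derivationAction_mul_of_traceless (v : (ι → κ) → R) {w : (ι → κ) → R}
    (hw : ∀ p q, p ≠ q → contraction R κ p q *ᵥ w = 0) :
    ∑ i, ∑ a, ∑ b, derivationAction (single a b 1) v i * derivationAction (single b a 1) w i =
      Fintype.card ι * (v ⬝ᵥ w) := by
  have hdiag (p q : ι) :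
      ∑ i : ι → κ, v (Function.update i p (i q)) * w (Function.update i q (i p)) =
        if p = q then v ⬝ᵥ w else 0 := by
    split_ifs with hpq
    · subst hpq
      simp [dotProduct]
    · rw [sum_update_mul_update hpq, hw p q hpq, dotProduct_zero]
  simp only [sum_derivationAction_mul]
  rw [Finset.sum_comm, Finset.sum_congr rfl fun p _ => Finset.sum_comm]
  simp [hdiag]

end MatrixUnits

end Derivation

section PlaneRotation

variable {κ : Type*} [DecidableEq κ]

/-- The rotation by the angle `t` in the plane of the coordinates `a` and `b`. -/
def planeRotation (a b : κ) (t : ℝ) : Matrix κ κ ℝ :=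
  1 + (Real.cos t - 1) • (single a a 1 + single b b 1) +
    Real.sin t • (single a b 1 - single b a 1)

theorem planeRotation_mem_orthogonalGroup [Fintype κ] {a b : κ} (hab : a ≠ b) (t : ℝ) :
    planeRotation a b t ∈ orthogonalGroup κ ℝ := by
  rw [mem_orthogonalGroup_iff, planeRotation]
  set P : Matrix κ κ ℝ := single a a 1 + single b b 1
  set X : Matrix κ κ ℝ := single a b 1 - single b a 1
  have hPP : P * P = P := by simp [P, mul_add, add_mul, hab, hab.symm]
  have hPX : P * X = X := by simp [P, X, mul_sub, add_mul, hab, hab.symm]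
  have hXP : X * P = X := by simp [P, X, mul_add, sub_mul, hab, hab.symm]; abel
  have hXX : X * X = -P := by simp [P, X, mul_sub, sub_mul, hab, hab.symm]; abel
  have hP : Pᵀ = P := by simp [P]
  have hX : Xᵀ = -X := by simp [X]
  have hcs : (Real.cos t - 1) + (Real.cos t - 1) + (Real.cos t - 1) * (Real.cos t - 1) +
      Real.sin t * Real.sin t = 0 := by
    linear_combination Real.sin_sq_add_cos_sq t
  calc _ = 1 + ((Real.cos t - 1) + (Real.cos t - 1) + (Real.cos t - 1) * (Real.cos t - 1) +
        Real.sin t * Real.sin t) • P := by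
        simp only [transpose_add, transpose_smul, transpose_one, hP, hX, mul_add, add_mul,
          mul_one, one_mul, Algebra.smul_mul_assoc, Algebra.mul_smul_comm, mul_neg,
          hPP, hPX, hXP, hXX]
        module
    _ = 1 := by rw [hcs, zero_smul, add_zero]

theorem hasDerivAt_planeRotation_zero (a b x y : κ) :
    HasDerivAt (fun t => planeRotation a b t x y)
      ((single a b 1 - single b a 1 : Matrix κ κ ℝ) x y) 0 := by
  have hcos := ((Real.hasDerivAt_cos 0).sub_const 1).mul_const
    ((single a a 1 + single b b 1 : Matrix κ κ ℝ) x y)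
  have hsin := (Real.hasDerivAt_sin 0).mul_const
    ((single a b 1 - single b a 1 : Matrix κ κ ℝ) x y)
  have hsum := (hcos.const_add ((1 : Matrix κ κ ℝ) x y)).add hsin
  rw [Real.sin_zero, neg_zero, zero_mul, zero_add, Real.cos_zero, one_mul] at hsum
  exact hsum

end PlaneRotation

/-! ### Orthogonal invariants -/

theorem map_mul_transpose_of_mem_orthogonalGroup {κ R S : Type*} [Fintype κ] [DecidableEq κ]
    [CommRing R] [CommRing S] {U : Matrix κ κ R} (hU : U ∈ orthogonalGroup κ R) (f : R →+* S) :
    U.map f * (U.map f)ᵀ = 1 := by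
  have hmul : U * Uᵀ = 1 := (mem_orthogonalGroup_iff κ R).1 hU
  rw [← transpose_map, ← Matrix.map_mul, hmul, Matrix.map_one _ (map_zero _) (map_one _)]

section Invariants

variable {𝕜 ι κ : Type*} [RCLike 𝕜] [Fintype ι] [DecidableEq ι] [Fintype κ] [DecidableEq κ]

/-- The tensors fixed by `U^{⊗ι}` for every real orthogonal matrix `U`, in standard
coordinates. -/
def orthogonalInvariants (𝕜 ι κ : Type*) [RCLike 𝕜] [Fintype ι] [DecidableEq ι] [Fintype κ]
    [DecidableEq κ] : Submodule 𝕜 ((ι → κ) → 𝕜) :=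
  ⨅ U : orthogonalGroup κ ℝ, LinearMap.eqLocus
    (tensorPow ι ((U : Matrix κ κ ℝ).map (algebraMap ℝ 𝕜))).mulVecLin LinearMap.id

theorem mem_orthogonalInvariants_iff {v : (ι → κ) → 𝕜} :
    v ∈ orthogonalInvariants 𝕜 ι κ ↔ ∀ U : orthogonalGroup κ ℝ,
      tensorPow ι ((U : Matrix κ κ ℝ).map (algebraMap ℝ 𝕜)) *ᵥ v = v := by
  simp [orthogonalInvariants]

theorem IsMatching.matchingVec_mem_orthogonalInvariants {τ : Perm ι} (hτ : IsMatching τ) :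
    matchingVec 𝕜 κ τ ∈ orthogonalInvariants 𝕜 ι κ := by
  refine mem_orthogonalInvariants_iff.2 fun U => hτ.tensorPow_mulVec_matchingVec ?_
  exact map_mul_transpose_of_mem_orthogonalGroup U.2 _

theorem contraction_mulVec_mem_orthogonalInvariants {v : (ι → κ) → 𝕜}
    (hv : v ∈ orthogonalInvariants 𝕜 ι κ) {p q : ι} (hpq : p ≠ q) :
    contraction 𝕜 κ p q *ᵥ v ∈ orthogonalInvariants 𝕜 (PairCompl p q) κ := by
  refine mem_orthogonalInvariants_iff.2 fun U => ?_
  have hU := mul_eq_one_comm.1 (map_mul_transpose_of_mem_orthogonalGroup U.2 (algebraMap ℝ 𝕜))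
  rw [mulVec_mulVec, ← contraction_mul_tensorPow hpq hU, ← mulVec_mulVec,
    mem_orthogonalInvariants_iff.1 hv U]

theorem derivationAction_single_comm {v : (ι → κ) → 𝕜} (hv : v ∈ orthogonalInvariants 𝕜 ι κ)
    (a b : κ) : derivationAction (single a b 1) v = derivationAction (single b a 1) v := by
  rcases eq_or_ne a b with rfl | hab
  · rfl
  let M (t : ℝ) : Matrix κ κ 𝕜 := (planeRotation a b t).map (algebraMap ℝ 𝕜)
  let X : Matrix κ κ 𝕜 := single a b 1 - single b a 1
  have hM (x y : κ) : HasDerivAt (fun t => M t x y) (X x y) 0 := by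
    have hX : X x y = algebraMap ℝ 𝕜 ((single a b 1 - single b a 1 : Matrix κ κ ℝ) x y) := by
      simp [X, single_apply, apply_ite (algebraMap ℝ 𝕜)]
    rw [hX]
    exact (RCLike.ofRealCLM (K := 𝕜)).hasFDerivAt.comp_hasDerivAt 0
      (hasDerivAt_planeRotation_zero a b x y)
  have hM0 : M 0 = 1 := by
    simp [M, planeRotation]
  have hX : derivationAction X v = 0 := by
    ext i
    refine (hasDerivAt_tensorPow_mulVec hM hM0 v i).unique ?_
    simp only [M, mem_orthogonalInvariants_iff.1 hv ⟨_, planeRotation_mem_orthogonalGroup hab _⟩]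
    exact hasDerivAt_const 0 (v i)
  rwa [derivationAction_sub, sub_eq_zero] at hX

theorem even_card_of_mem_orthogonalInvariants {v : (ι → κ) → 𝕜}
    (hv : v ∈ orthogonalInvariants 𝕜 ι κ) {i : ι → κ} (hi : v i ≠ 0) (a : κ) :
    Even (Finset.univ.filter fun p => i p = a).card := by
  let d (x : κ) : ℝ := if x = a then -1 else 1
  have hd : diagonal d ∈ orthogonalGroup κ ℝ := by
    rw [mem_orthogonalGroup_iff, diagonal_transpose, diagonal_mul_diagonal, ← diagonal_one]
    congr 1
    ext x
    by_cases hx : x = a <;> simp [d, hx]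
  have h := congrFun (mem_orthogonalInvariants_iff.1 hv ⟨_, hd⟩) i
  rw [diagonal_map (map_zero _), tensorPow_diagonal, mulVec_diagonal, mul_eq_right₀ hi] at h
  simp only [d, apply_ite, map_neg, map_one] at h
  rw [Finset.prod_ite, Finset.prod_const, Finset.prod_const_one, mul_one] at h
  exact (neg_one_pow_eq_one_iff_even (by norm_num)).1 h

theorem two_mul_card_mul_norm_sq_le_norm_derivationAction_sq {v : (ι → κ) → 𝕜}
    (hv : v ∈ orthogonalInvariants 𝕜 ι κ) (a : κ) (i : ι → κ) :
    2 * (Finset.univ.filter fun p => i p = a).card * ‖v i‖ ^ 2 ≤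
      ‖derivationAction (single a a 1) v i‖ ^ 2 := by
  rw [derivationAction_single_self, norm_mul, mul_pow, RCLike.norm_natCast]
  by_cases hi : v i = 0
  · simp [hi]
  obtain ⟨m, hm⟩ := even_card_of_mem_orthogonalInvariants hv hi a
  have hsq : 2 * (m + m) ≤ (m + m) ^ 2 := by nlinarith [Nat.le_self_pow two_ne_zero m]
  rw [hm]
  gcongr
  exact_mod_cast hsq

theorem sum_norm_sq_derivationAction {v : (ι → κ) → 𝕜} (hv : v ∈ orthogonalInvariants 𝕜 ι κ)
    (htr : ∀ p q, p ≠ q → contraction 𝕜 κ p q *ᵥ v = 0) :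
    ∑ i, ∑ a, ∑ b, ‖derivationAction (single a b 1) v i‖ ^ 2 =
      Fintype.card ι * ∑ i, ‖v i‖ ^ 2 := by
  have hstar (a b : κ) (i : ι → κ) : derivationAction (single a b 1) (star v) i =
      star (derivationAction (single a b 1) v i) := by
    simp [derivationAction_single_apply, apply_ite]
  have hterm (a b : κ) (i : ι → κ) :
      derivationAction (single a b 1) (star v) i * derivationAction (single b a 1) v i =
        (‖derivationAction (single a b 1) v i‖ : 𝕜) ^ 2 := by
    rw [hstar, derivationAction_single_comm hv b a]
    exact RCLike.conj_mul _
  have hdot : star v ⬝ᵥ v = ∑ i, (‖v i‖ : 𝕜) ^ 2 :=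
    Finset.sum_congr rfl fun i _ => RCLike.conj_mul (v i)
  have hsum := sum_sum_derivationAction_mul_of_traceless (star v) htr
  simp only [hterm, hdot] at hsum
  exact_mod_cast hsum

theorem eq_zero_of_mem_orthogonalInvariants_of_traceless [Nonempty ι] {v : (ι → κ) → 𝕜}
    (hv : v ∈ orthogonalInvariants 𝕜 ι κ)
    (htr : ∀ p q, p ≠ q → contraction 𝕜 κ p q *ᵥ v = 0) : v = 0 := by
  have hcard (i : ι → κ) :
      ∑ a, ((Finset.univ.filter fun p => i p = a).card : ℝ) = Fintype.card ι := by
    exact_mod_cast (Finset.card_eq_sum_card_fiberwise fun p _ => Finset.mem_univ (i p)).symm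
  have hle : 2 * (Fintype.card ι * ∑ i, ‖v i‖ ^ 2) ≤ Fintype.card ι * ∑ i, ‖v i‖ ^ 2 :=
    calc 2 * (Fintype.card ι * ∑ i, ‖v i‖ ^ 2)
        = ∑ i, ∑ a, 2 * (Finset.univ.filter fun p => i p = a).card * ‖v i‖ ^ 2 := by
          simp only [← Finset.sum_mul, ← Finset.mul_sum, hcard, mul_assoc]
      _ ≤ ∑ i, ∑ a, ‖derivationAction (single a a 1) v i‖ ^ 2 :=
          Finset.sum_le_sum fun i _ => Finset.sum_le_sum fun a _ =>
            two_mul_card_mul_norm_sq_le_norm_derivationAction_sq hv a i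
      _ ≤ ∑ i, ∑ a, ∑ b, ‖derivationAction (single a b 1) v i‖ ^ 2 :=
          Finset.sum_le_sum fun i _ => Finset.sum_le_sum fun a _ =>
            Finset.single_le_sum (f := fun b => ‖derivationAction (single a b 1) v i‖ ^ 2)
              (fun b _ => sq_nonneg _) (Finset.mem_univ a)
      _ = Fintype.card ι * ∑ i, ‖v i‖ ^ 2 := sum_norm_sq_derivationAction hv htr
  have hpos : (0 : ℝ) < Fintype.card ι := by exact_mod_cast Fintype.card_pos
  have hnonneg : ∀ i ∈ Finset.univ, 0 ≤ ‖v i‖ ^ 2 := fun i _ => sq_nonneg _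
  have hzero : ∑ i, ‖v i‖ ^ 2 = 0 :=
    le_antisymm (nonpos_of_mul_nonpos_right (by linarith) hpos) (Finset.sum_nonneg hnonneg)
  ext i
  simpa using (Finset.sum_eq_zero_iff_of_nonneg hnonneg).1 hzero i (Finset.mem_univ i)

theorem eq_zero_of_forall_matchingVec_dotProduct_eq_zero {v : (ι → κ) → 𝕜}
    (hv : v ∈ orthogonalInvariants 𝕜 ι κ)
    (horth : ∀ τ : Perm ι, IsMatching τ → matchingVec 𝕜 κ τ ⬝ᵥ v = 0) : v = 0 := by
  induction hn : Fintype.card ι using Nat.strong_induction_on generalizing ι with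
  | _ n ih =>
  subst hn
  rcases isEmpty_or_nonempty ι with _ | _
  · ext i
    have h := horth 1 ⟨fun _ => rfl, isEmptyElim⟩
    simpa [dotProduct, matchingVec, Subsingleton.elim i default] using h
  refine eq_zero_of_mem_orthogonalInvariants_of_traceless hv fun p q hpq => ?_
  refine ih _ (Fintype.card_subtype_lt (x := p) fun h => h.1 rfl)
    (contraction_mulVec_mem_orthogonalInvariants hv hpq) (fun σ hσ => ?_) rfl
  rw [dotProduct_mulVec, matchingVec_vecMul_contraction (addPair_left σ) (addPair_right σ)
    fun x => (addPair_coe σ x).symm]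
  exact horth _ (hσ.addPair hpq)

theorem span_matchingVec_eq_orthogonalInvariants :
    Submodule.span 𝕜 (matchingVec 𝕜 κ '' {τ : Perm ι | IsMatching τ}) =
      orthogonalInvariants 𝕜 ι κ := by
  have hle : Submodule.span 𝕜 (matchingVec 𝕜 κ '' {τ : Perm ι | IsMatching τ}) ≤
      orthogonalInvariants 𝕜 ι κ := by
    rw [Submodule.span_le]
    rintro _ ⟨τ, hτ, rfl⟩
    exact hτ.matchingVec_mem_orthogonalInvariants
  refine hle.antisymm fun v hv => ?_
  set W := Submodule.span 𝕜 (matchingVec 𝕜 κ '' {τ : Perm ι | IsMatching τ})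
  let e := WithLp.linearEquiv 2 𝕜 ((ι → κ) → 𝕜)
  obtain ⟨w, hw, u, hu, hvwu⟩ :=
    (W.comap e.toLinearMap).exists_add_mem_mem_orthogonal (e.symm v)
  have hv_add : v = e w + e u := by rw [← map_add, ← hvwu, e.apply_symm_apply]
  have hu_inv : e u ∈ orthogonalInvariants 𝕜 ι κ := by
    rw [← add_sub_cancel_left (e w) (e u), ← hv_add]
    exact sub_mem hv (hle hw)
  have hu_zero : e u = 0 := eq_zero_of_forall_matchingVec_dotProduct_eq_zero hu_inv fun τ hτ => by
    have hmem : e.symm (matchingVec 𝕜 κ τ) ∈ W.comap e.toLinearMap :=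
      Submodule.subset_span ⟨τ, hτ, rfl⟩
    have hreal : star (matchingVec 𝕜 κ τ) = matchingVec 𝕜 κ τ := by
      ext i
      simp [matchingVec, apply_ite]
    rw [← hreal, dotProduct_comm]
    exact (Submodule.mem_orthogonal _ _).1 hu _ hmem
  rw [hv_add, hu_zero, add_zero]
  exact hw

end Invariants

theorem span_shortMatchings_eq_orthogonalInvariants {𝕜 ι κ : Type*} [RCLike 𝕜] [Fintype ι]
    [LinearOrder ι] [Fintype κ] [DecidableEq κ] :
    Submodule.span 𝕜 (matchingVec 𝕜 κ '' shortMatchings ι (Fintype.card κ)) =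
      orthogonalInvariants 𝕜 ι κ := by
  rw [← span_matchingVec_eq_orthogonalInvariants]
  refine (Submodule.span_mono (Set.image_mono fun τ hτ => hτ.1)).antisymm (Submodule.span_le.2 ?_)
  rintro _ ⟨τ, hτ, rfl⟩
  exact matchingVec_mem_span_shortMatchings 𝕜 κ hτ

/-! ### Tensors -/

section Tensors

variable {ι κ R : Type*} [Fintype ι] [Fintype κ] [DecidableEq κ] [CommSemiring R]

/-- The tensor `∑ e_{i(1)} ⊗ e_{i(2)} ⊗ ⋯` over the colorings `i` that are constant on the pairs
of the matching `τ`. -/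
def matchingTensor (R κ : Type*) [Fintype κ] [DecidableEq ι] [DecidableEq κ] [CommSemiring R]
    (τ : Perm ι) : ⨂[R] _ : ι, (κ → R) :=
  ∑ i : ι → κ with i ∘ τ = i, PiTensorProduct.tprod R fun p => Pi.single (i p) 1

/-- Coordinates in the standard basis of the tensor power. -/
def tensorCoords (ι κ R : Type*) [Fintype ι] [Fintype κ] [DecidableEq κ] [CommSemiring R] :
    (⨂[R] _ : ι, (κ → R)) ≃ₗ[R] ((ι → κ) → R) :=
  (Basis.piTensorProduct fun _ : ι => Pi.basisFun R κ).equivFun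

theorem tensorCoords_tprod (x : ι → κ → R) (i : ι → κ) :
    tensorCoords ι κ R (PiTensorProduct.tprod R x) i = ∏ p, x p (i p) := by
  simp [tensorCoords]

theorem tensorCoords_matchingTensor [DecidableEq ι] (τ : Perm ι) :
    tensorCoords ι κ R (matchingTensor R κ τ) = matchingVec R κ τ := by
  ext i
  rw [matchingTensor, map_sum, Finset.sum_apply]
  simp only [tensorCoords_tprod, Pi.single_apply, Fintype.prod_ite_zero, Finset.prod_const_one,
    ← funext_iff, matchingVec, Finset.sum_ite_eq, Finset.mem_filter, Finset.mem_univ, true_and]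

theorem tensorCoords_map_toLin' [DecidableEq ι] (M : Matrix κ κ R) (v : ⨂[R] _ : ι, (κ → R)) :
    tensorCoords ι κ R (PiTensorProduct.map (fun _ => toLin' M) v) =
      tensorPow ι M *ᵥ tensorCoords ι κ R v := by
  induction v using PiTensorProduct.induction_on with
  | smul_tprod r x =>
    simp only [map_smul, mulVec_smul]
    congr 1
    ext i
    simp only [PiTensorProduct.map_tprod, tensorCoords_tprod, toLin'_apply, mulVec, dotProduct,
      tensorPow, of_apply, ← Finset.prod_mul_distrib, Fintype.prod_sum]
  | add v w hv hw => simp only [map_add, mulVec_add, hv, hw]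

end Tensors

theorem tensorCoords_mem_orthogonalInvariants_iff {𝕜 ι κ : Type*} [RCLike 𝕜] [Fintype ι]
    [DecidableEq ι] [Fintype κ] [DecidableEq κ] {v : ⨂[𝕜] _ : ι, (κ → 𝕜)} :
    tensorCoords ι κ 𝕜 v ∈ orthogonalInvariants 𝕜 ι κ ↔ ∀ U : orthogonalGroup κ ℝ,
      PiTensorProduct.map
        (fun _ => toLin' ((U : Matrix κ κ ℝ).map (algebraMap ℝ 𝕜))) v = v := by
  simp only [mem_orthogonalInvariants_iff, ← tensorCoords_map_toLin', EmbeddingLike.apply_eq_iff_eq]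

theorem vTau_basis_of_orthogonal_invariants_general (𝕜 ι κ : Type*) [RCLike 𝕜] [Fintype ι]
    [LinearOrder ι] [Fintype κ] [DecidableEq κ] :
    LinearIndepOn 𝕜 (matchingTensor 𝕜 κ) (shortMatchings ι (Fintype.card κ)) ∧
    (Submodule.span 𝕜 (matchingTensor 𝕜 κ '' shortMatchings ι (Fintype.card κ)) :
      Set (⨂[𝕜] _ : ι, (κ → 𝕜))) =
      {v | ∀ U : orthogonalGroup κ ℝ, PiTensorProduct.map
        (fun _ => toLin' ((U : Matrix κ κ ℝ).map (algebraMap ℝ 𝕜))) v = v} := by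
  have hcoords : tensorCoords ι κ 𝕜 ∘ matchingTensor 𝕜 κ = matchingVec 𝕜 κ :=
    funext tensorCoords_matchingTensor
  constructor
  · refine LinearIndepOn.of_comp (tensorCoords ι κ 𝕜).toLinearMap ?_
    rw [LinearEquiv.coe_coe, hcoords]
    exact linearIndepOn_matchingVec 𝕜
  · ext v
    rw [Set.mem_ofPred_eq, ← tensorCoords_mem_orthogonalInvariants_iff,
      ← span_shortMatchings_eq_orthogonalInvariants, ← hcoords, Set.image_comp,
      ← LinearEquiv.coe_coe, ← Submodule.map_span, SetLike.mem_coe, LinearEquiv.coe_coe,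
      Submodule.mem_map_equiv, LinearEquiv.symm_apply_apply]

theorem setOf_lisLE_eq_shortMatchings (N l : ℕ) :
    {τ : Perm (Fin N) | τ * τ = 1 ∧ (∀ x, τ x ≠ x) ∧ lisLE τ l} = shortMatchings (Fin N) l := by
  ext τ
  have hτ : τ * τ = 1 ↔ Function.Involutive τ := Perm.ext_iff
  rw [Set.mem_ofPred_eq, hτ, lisLE_iff_increasingLengthLE, ← and_assoc]
  exact and_congr_left' ⟨fun h => ⟨h.1, h.2⟩, fun h => ⟨h.1, h.2⟩⟩

/-- The family `{v_τ : τ fixed-point-free involution of {1,…,2n}, L(τ) ≤ l}` is a basis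
of the space `F_{2n}(O(l))` of tensors fixed by `U^{⊗2n}` for every real orthogonal `U`. -/
theorem vTau_basis_of_orthogonal_invariants (n l : ℕ) :
    LinearIndependent ℂ
      (fun τ : {τ : Equiv.Perm (Fin (2 * n)) //
          τ * τ = 1 ∧ (∀ x, τ x ≠ x) ∧ lisLE τ l} => vTau n l τ.1) ∧
    (Submodule.span ℂ
        (Set.range (fun τ : {τ : Equiv.Perm (Fin (2 * n)) //
          τ * τ = 1 ∧ (∀ x, τ x ≠ x) ∧ lisLE τ l} => vTau n l τ.1)) :
      Set (⨂[ℂ] _ : Fin (2 * n), (Fin l → ℂ))) =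
      {v | ∀ U : Matrix.orthogonalGroup (Fin l) ℝ,
        tpow (2 * n) l ((U : Matrix (Fin l) (Fin l) ℝ).map (fun x : ℝ => (x : ℂ))) v
          = v} := by
  have h := vTau_basis_of_orthogonal_invariants_general ℂ (Fin (2 * n)) (Fin l)
  rwa [Fintype.card_fin, ← setOf_lisLE_eq_shortMatchings, Set.image_eq_range] at h
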